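/- arXiv:2302.01587 — 2 statements merged into one kernel-verified Lean document; each statement's English description precedes it below -/
import Mathlib

section
/- If G is a finite connected simple graph on at least 4 vertices with gp_e(G) = m(G) − 1, then diam(G) = 3. -/
/-- `X` is an edge general position set of `G`: `X` consists of edges of `G` and every
shortest path of `G` contains at most two edges of `X`. -/
def SimpleGraph.IsEdgeGPSet {V : Type*} (G : SimpleGraph V) (X : Set (Sym2 V)) : Prop :=
  X ⊆ G.edgeSet ∧
    ∀ (u v : V) (p : G.Walk u v), p.IsPath → p.length = G.dist u v →
      (X ∩ {e | e ∈ p.edges}).ncard ≤ 2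

/-- The edge general position number of `G`. -/
noncomputable def SimpleGraph.egp {V : Type*} (G : SimpleGraph V) : ℕ :=
  sSup {n | ∃ X : Set (Sym2 V), G.IsEdgeGPSet X ∧ X.ncard = n}

/-!
Let `X` be an edge general position set. A shortest path between two vertices at maximal distance
has at most two of its edges in `X`, so at least `diam G - 2` of them lie outside `X`; hence
`diam G ≤ 2 + (m(G) - gp_e(G))`. Conversely, if `diam G ≤ 2` then no shortest path has three edges,
so all of `E(G)` is in general position and `gp_e(G) = m(G)`. Since `G` has an edge, missing the
maximum by exactly one therefore forces `2 < diam G ≤ 3`.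
-/

section

variable {V : Type*} {G : SimpleGraph V} {X : Set (Sym2 V)}

lemma ncard_edgeSet_of_isTrail {u v : V} {p : G.Walk u v} (hp : p.IsTrail) :
    p.edgeSet.ncard = p.length := by
  classical
  rw [← p.coe_edges_toFinset, Set.ncard_coe_finset,
    List.toFinset_card_of_nodup hp.edges_nodup, p.length_edges]

lemma length_le_two_add_encard_edgeSet_sdiff (hX : G.IsEdgeGPSet X) {u v : V} {p : G.Walk u v}
    (hp : p.length = G.dist u v) : (p.length : ℕ∞) ≤ 2 + (G.edgeSet \ X).encard := by
  have hpath : p.IsPath := p.isPath_of_length_eq_dist hp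
  have hfin : p.edgeSet.Finite := p.edges.finite_toSet
  have hinter : (p.edgeSet ∩ X).encard ≤ 2 := by
    rw [Set.inter_comm, ← (hfin.inter_of_right X).cast_ncard_eq]
    exact_mod_cast hX.2 u v p hpath hp
  calc (p.length : ℕ∞) = p.edgeSet.encard := by
        rw [← ncard_edgeSet_of_isTrail hpath.isTrail, hfin.cast_ncard_eq]
    _ = (p.edgeSet ∩ X).encard + (p.edgeSet \ X).encard := by
        rw [add_comm, Set.encard_sdiff_add_encard_inter]
    _ ≤ 2 + (G.edgeSet \ X).encard := by
        gcongr
        exact p.edges_subset_edgeSet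

lemma ediam_le_two_add_encard_edgeSet_sdiff (hG : G.Preconnected) (hX : G.IsEdgeGPSet X) :
    G.ediam ≤ 2 + (G.edgeSet \ X).encard := by
  refine SimpleGraph.ediam_le_of_edist_le fun u v ↦ ?_
  obtain ⟨p, hp⟩ := (hG u v).exists_walk_length_eq_edist
  have hlen : p.length = G.dist u v := by rw [SimpleGraph.dist, ← hp, ENat.toNat_natCast]
  exact hp ▸ length_le_two_add_encard_edgeSet_sdiff hX hlen

lemma isEdgeGPSet_edgeSet_of_ediam_le_two (h : G.ediam ≤ 2) : G.IsEdgeGPSet G.edgeSet := by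
  refine ⟨subset_rfl, fun u v p hp hlen ↦ ?_⟩
  have hdist : G.dist u v ≤ 2 := ENat.toNat_le_of_le_natCast (SimpleGraph.edist_le_ediam.trans h)
  calc (G.edgeSet ∩ p.edgeSet).ncard
      ≤ p.edgeSet.ncard := Set.ncard_le_ncard Set.inter_subset_right p.edges.finite_toSet
    _ = G.dist u v := by rw [ncard_edgeSet_of_isTrail hp.isTrail, hlen]
    _ ≤ 2 := hdist

lemma isGreatest_egp (hE : G.edgeSet.Finite) :
    IsGreatest {n | ∃ X : Set (Sym2 V), G.IsEdgeGPSet X ∧ X.ncard = n} G.egp := by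
  have hbdd : BddAbove {n | ∃ X : Set (Sym2 V), G.IsEdgeGPSet X ∧ X.ncard = n} := by
    refine ⟨G.edgeSet.ncard, ?_⟩
    rintro _ ⟨X, hX, rfl⟩
    exact Set.ncard_le_ncard hX.1 hE
  have hempty : G.IsEdgeGPSet ∅ := ⟨Set.empty_subset _, by simp⟩
  exact ⟨Nat.sSup_mem ⟨_, ∅, hempty, rfl⟩ hbdd, fun _ hn ↦ le_csSup hbdd hn⟩

lemma egp_le_ncard_edgeSet (hE : G.edgeSet.Finite) : G.egp ≤ G.edgeSet.ncard := by
  obtain ⟨X, hX, hcard⟩ := (isGreatest_egp hE).1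
  exact hcard ▸ Set.ncard_le_ncard hX.1 hE

theorem ediam_le_two_add_ncard_edgeSet_sub_egp (hG : G.Preconnected) (hE : G.edgeSet.Finite) :
    G.ediam ≤ 2 + (G.edgeSet.ncard - G.egp : ℕ) := by
  obtain ⟨X, hX, hcard⟩ := (isGreatest_egp hE).1
  rw [← hcard, ← Set.ncard_sdiff hX.1 (hE.subset hX.1), hE.sdiff.cast_ncard_eq]
  exact ediam_le_two_add_encard_edgeSet_sdiff hG hX

theorem egp_eq_ncard_edgeSet_iff_ediam_le_two (hG : G.Preconnected) (hE : G.edgeSet.Finite) :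
    G.egp = G.edgeSet.ncard ↔ G.ediam ≤ 2 where
  mp h := by simpa [h] using ediam_le_two_add_ncard_edgeSet_sub_egp hG hE
  mpr h := (egp_le_ncard_edgeSet hE).antisymm
    ((isGreatest_egp hE).2 ⟨_, isEdgeGPSet_edgeSet_of_ediam_le_two h, rfl⟩)

lemma edgeSet_nonempty_of_preconnected [Nontrivial V] (hG : G.Preconnected) :
    G.edgeSet.Nonempty :=
  have ⟨u⟩ := ‹Nontrivial V›.to_nonempty
  have ⟨v, huv⟩ := hG.exists_adj_of_nontrivial u
  ⟨s(u, v), huv⟩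

end

/-- If `G` is a finite connected graph on at least 4 vertices with
`gp_e(G) = m(G) - 1`, then `diam(G) = 3`. -/
theorem diam_eq_three_of_egp_eq_edgeCard_sub_one {V : Type*} [Fintype V] (G : SimpleGraph V)
    (hG : G.Connected) (hn : 4 ≤ Fintype.card V)
    (h : G.egp = G.edgeSet.ncard - 1) :
    G.diam = 3 := by
  have : Nontrivial V := Fintype.one_lt_card_iff_nontrivial.mp (by omega)
  have hE : G.edgeSet.Finite := G.edgeSet.toFinite
  have hm : 0 < G.edgeSet.ncard :=
    (Set.ncard_pos hE).mpr (edgeSet_nonempty_of_preconnected hG.preconnected)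
  have hlower : 2 < G.ediam := not_le.mp fun hle ↦ by
    have hmax := (egp_eq_ncard_edgeSet_iff_ediam_le_two hG.preconnected hE).mpr hle
    omega
  have hupper : G.ediam ≤ 3 := by
    have hgap : G.edgeSet.ncard - G.egp = 1 := by omega
    simpa [hgap, two_add_one_eq_three] using
      ediam_le_two_add_ncard_edgeSet_sub_egp hG.preconnected hE
  have hediam : G.ediam = 3 := hupper.antisymm (Order.add_one_le_of_lt hlower)
  rw [SimpleGraph.diam, hediam, ENat.toNat_ofNat]
end

section
/- Let G be a finite connected simple graph. Then gp_e(G) = 3 if and only if G is the complete graph K₃ or G is a tree with exactly three leaves. -/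
/-!
In a tree a geodesic meets leaves only at its ends, so if there are at least three leaves, the
pendant edges are in general position. Conversely, a closed walk made of geodesics that visits the
`k` leaves one after the other crosses every edge at least twice, while each of its `k` geodesics
contains at most two edges of a set `X` in general position; hence `2 |X| ≤ 2 k`, and
`gp_e` is the number of leaves.

If `G` has a cycle, suppose first that its girth is at least four. A shortest cycle is isometric, so
its edges number `i` and `i + ⌊girth / 2⌋` are in the Djoković–Winkler relation, and distinct edges
related in this way never lie on a common geodesic. Two such pairs are four edges in general
position. If instead `G` contains a triangle, no two of its edges lie on a common geodesic, so the
triangle and any one further edge are in general position; hence `gp_e(G) = 3` forces `G = K₃`.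
-/

namespace EdgeGeneralPosition

open SimpleGraph

variable {V : Type*} {G : SimpleGraph V} {u v : V}

section Geodesics

/-- The part of the walk `p` from its `i`-th to its `j`-th vertex, typed by these vertices so that
distances along `p` can be read off its length. -/
def segment (p : G.Walk u v) {i j : ℕ} (hij : i ≤ j) : G.Walk (p.getVert i) (p.getVert j) :=
  ((p.drop i).take (j - i)).copy rfl (by rw [Walk.drop_getVert, Nat.add_sub_cancel' hij])

lemma length_segment (p : G.Walk u v) {i j : ℕ} (hij : i ≤ j) (hj : j ≤ p.length) :
    (segment p hij).length = j - i := by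
  rw [segment, Walk.length_copy, Walk.take_length, Walk.drop_length]
  omega

lemma segment_isSubwalk (p : G.Walk u v) {i j : ℕ} (hij : i ≤ j) :
    (segment p hij).IsSubwalk p :=
  (((p.drop i).isSubwalk_take _).trans (p.isSubwalk_drop i)).copy _ _ rfl rfl

lemma dist_getVert_le (p : G.Walk u v) {i j : ℕ} (hij : i ≤ j) (hj : j ≤ p.length) :
    G.dist (p.getVert i) (p.getVert j) ≤ j - i :=
  length_segment p hij hj ▸ dist_le _

lemma dist_getVert_of_length_eq_dist {p : G.Walk u v} (hp : p.length = G.dist u v) {i j : ℕ}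
    (hij : i ≤ j) (hj : j ≤ p.length) : G.dist (p.getVert i) (p.getVert j) = j - i :=
  length_segment p hij hj ▸ (length_eq_dist_of_subwalk hp (segment_isSubwalk p hij)).symm

lemma exists_getVert_of_mem_edges {p : G.Walk u v} {e : Sym2 V} (he : e ∈ p.edges) :
    ∃ i < p.length, e = s(p.getVert i, p.getVert (i + 1)) := by
  obtain ⟨i, hi, rfl⟩ := List.mem_iff_getElem.mp he
  exact ⟨i, p.length_edges ▸ hi, p.getElem_edges hi⟩

lemma exists_two_le_dist_of_mem_edges {p : G.Walk u v} (hp : p.length = G.dist u v)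
    {e f : Sym2 V} (he : e ∈ p.edges) (hf : f ∈ p.edges) (hef : e ≠ f) :
    ∃ a ∈ e, ∃ b ∈ f, 2 ≤ G.dist a b := by
  obtain ⟨i, hi, rfl⟩ := exists_getVert_of_mem_edges he
  obtain ⟨j, hj, rfl⟩ := exists_getVert_of_mem_edges hf
  wlog hij : i < j generalizing i j
  · obtain ⟨b, hb, a, ha, hab⟩ := this j hj hf i hi he hef.symm (by grind)
    exact ⟨a, ha, b, hb, G.dist_comm ▸ hab⟩
  refine ⟨_, Sym2.mem_mk_left _ _, _, Sym2.mem_mk_right _ _, ?_⟩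
  rw [dist_getVert_of_length_eq_dist hp (by omega) hj]
  omega

/-- The Djoković–Winkler relation `Θ` between edges `e = ab` and `f = xy`, whose use here is that
distinct related edges never share a geodesic. Renaming the ends of `e` or `f` does not affect the
condition. -/
def DjokovicWinkler (G : SimpleGraph V) (e f : Sym2 V) : Prop :=
  ∃ a b x y, e = s(a, b) ∧ f = s(x, y) ∧
    G.dist a x + G.dist b y ≠ G.dist a y + G.dist b x

lemma DjokovicWinkler.symm {e f : Sym2 V} : DjokovicWinkler G e f → DjokovicWinkler G f e := by
  rintro ⟨a, b, x, y, he, hf, h⟩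
  refine ⟨x, y, a, b, hf, he, ?_⟩
  rwa [G.dist_comm (u := x), G.dist_comm (u := y), G.dist_comm (u := x), G.dist_comm (u := y),
    add_comm (G.dist b x)]

lemma DjokovicWinkler.eq_of_mem_edges {e f : Sym2 V} (h : DjokovicWinkler G e f)
    {p : G.Walk u v} (hp : p.length = G.dist u v) (he : e ∈ p.edges) (hf : f ∈ p.edges) :
    e = f := by
  by_contra hef
  obtain ⟨i, hi, rfl⟩ := exists_getVert_of_mem_edges he
  obtain ⟨j, hj, rfl⟩ := exists_getVert_of_mem_edges hf
  wlog hij : i < j generalizing i j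
  · exact this j hj hf i hi he h.symm (Ne.symm hef) (by grind)
  obtain ⟨a, b, x, y, hab, hxy, h⟩ := h
  have hdist : ∀ {k l : ℕ}, k ≤ l → l ≤ p.length →
      G.dist (p.getVert k) (p.getVert l) = l - k := dist_getVert_of_length_eq_dist hp
  have outer := hdist (show i ≤ j + 1 by omega) hj
  have inner := hdist (show i + 1 ≤ j by omega) (by omega)
  have left := hdist (show i ≤ j by omega) (by omega)
  have right := hdist (show i + 1 ≤ j + 1 by omega) hj
  rcases Sym2.eq_iff.mp hab with ⟨rfl, rfl⟩ | ⟨rfl, rfl⟩ <;>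
    rcases Sym2.eq_iff.mp hxy with ⟨rfl, rfl⟩ | ⟨rfl, rfl⟩ <;> omega

end Geodesics

section GeneralPosition

/-- Every geodesic of `G` contains at most `n` edges of `X`; for a set of edges and `n = 2` this is
edge general position. -/
def MeetsGeodesicsAtMost (G : SimpleGraph V) (n : ℕ) (X : Set (Sym2 V)) : Prop :=
  ∀ ⦃u v : V⦄ (p : G.Walk u v), p.length = G.dist u v → (X ∩ {e | e ∈ p.edges}).ncard ≤ n

lemma isEdgeGPSet_iff {X : Set (Sym2 V)} :
    G.IsEdgeGPSet X ↔ X ⊆ G.edgeSet ∧ MeetsGeodesicsAtMost G 2 X :=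
  and_congr_right fun _ => ⟨fun h u v p hp => h u v p (p.isPath_of_length_eq_dist hp) hp,
    fun h _ _ p _ hp => h p hp⟩

lemma MeetsGeodesicsAtMost.union {m n : ℕ} {X Y : Set (Sym2 V)}
    (hX : MeetsGeodesicsAtMost G m X) (hY : MeetsGeodesicsAtMost G n Y) :
    MeetsGeodesicsAtMost G (m + n) (X ∪ Y) := fun _ _ p hp => by
  rw [Set.union_inter_distrib_right]
  exact (Set.ncard_union_le _ _).trans (add_le_add (hX p hp) (hY p hp))

lemma meetsGeodesicsAtMost_one {X : Set (Sym2 V)}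
    (hX : ∀ ⦃u v : V⦄ (p : G.Walk u v), p.length = G.dist u v →
      ∀ e ∈ X, ∀ f ∈ X, e ∈ p.edges → f ∈ p.edges → e = f) :
    MeetsGeodesicsAtMost G 1 X := fun _ _ p hp =>
  (Set.ncard_le_one (p.edges.finite_toSet.inter_of_right X)).mpr
    fun e he f hf => hX p hp e he.1 f hf.1 he.2 hf.2

lemma DjokovicWinkler.meetsGeodesicsAtMost_one {e f : Sym2 V} (h : DjokovicWinkler G e f) :
    MeetsGeodesicsAtMost G 1 {e, f} := by
  refine EdgeGeneralPosition.meetsGeodesicsAtMost_one fun u v p hp => ?_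
  rintro _ (rfl | rfl) _ (rfl | rfl) he hf
  exacts [rfl, h.eq_of_mem_edges hp he hf, h.symm.eq_of_mem_edges hp he hf, rfl]

lemma ncard_le_egp [Finite V] {X : Set (Sym2 V)} (hX : G.IsEdgeGPSet X) : X.ncard ≤ G.egp := by
  refine le_csSup ⟨(Set.univ : Set (Sym2 V)).ncard, ?_⟩ ⟨X, hX, rfl⟩
  rintro _ ⟨Y, -, rfl⟩
  exact Set.ncard_le_ncard Y.subset_univ

lemma egp_le {n : ℕ} (h : ∀ X, G.IsEdgeGPSet X → X.ncard ≤ n) : G.egp ≤ n := by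
  refine csSup_le ⟨0, ∅, ⟨by simp, by simp⟩, by simp⟩ ?_
  rintro _ ⟨X, hX, rfl⟩
  exact h X hX

end GeneralPosition

section Cliques

lemma egp_eq_ncard_edgeSet [Finite V] (h : ∀ u v, G.dist u v ≤ 2) :
    G.egp = G.edgeSet.ncard := by
  classical
  refine le_antisymm (egp_le fun X hX => Set.ncard_le_ncard hX.1) (ncard_le_egp ?_)
  refine ⟨subset_rfl, fun u v p _ hp => ?_⟩
  calc (G.edgeSet ∩ {e | e ∈ p.edges}).ncard
      ≤ (p.edges.toFinset : Set (Sym2 V)).ncard :=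
        Set.ncard_le_ncard fun e he => by simpa using he.2
    _ ≤ p.edges.length := (Set.ncard_coe_finset _).trans_le p.edges.toFinset_card_le
    _ = G.dist u v := p.length_edges.trans hp
    _ ≤ 2 := h u v

lemma egp_top [Finite V] : (⊤ : SimpleGraph V).egp = (Nat.card V).choose 2 := by
  classical
  have := Fintype.ofFinite V
  have hdist : ∀ u v, (⊤ : SimpleGraph V).dist u v ≤ 2 := fun u v => by
    rw [dist_top]
    split_ifs <;> omega
  rw [egp_eq_ncard_edgeSet hdist, ← coe_edgeFinset, Set.ncard_coe_finset,
    card_edgeFinset_top_eq_card_choose_two, Nat.card_eq_fintype_card]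

lemma nonempty_iso_top_fin_iff [Finite V] {n : ℕ} :
    Nonempty (G ≃g (⊤ : SimpleGraph (Fin n))) ↔ G = ⊤ ∧ Nat.card V = n := by
  constructor
  · rintro ⟨f⟩
    refine ⟨eq_top_iff_forall_ne_adj.mpr fun a b hab => ?_, ?_⟩
    · exact f.map_adj_iff.mp (f.injective.ne hab)
    · rw [Nat.card_congr f.toEquiv, Nat.card_fin]
  · rintro ⟨rfl, hn⟩
    exact ⟨Iso.completeGraph (Finite.equivFinOfCardEq hn)⟩

/-- The edges of `G` with both ends in `s`; for a clique `s`, a geodesic contains at most one. -/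
def spannedEdges (G : SimpleGraph V) (s : Set V) : Set (Sym2 V) :=
  {e ∈ G.edgeSet | ∀ v ∈ e, v ∈ s}

lemma ncard_spannedEdges {n : ℕ} {s : Finset V} (hs : G.IsNClique n s) :
    (spannedEdges G s).ncard = n.choose 2 := by
  classical
  have heq : spannedEdges G s = (s.offDiag.image Sym2.mk.uncurry : Finset (Sym2 V)) := by
    rw [Finset.coe_image]
    refine Set.Subset.antisymm (fun e => ?_) ?_
    · induction e with
      | h x y =>
        rintro ⟨hxy, hs⟩
        exact ⟨(x, y), Finset.mem_offDiag.mpr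
          ⟨hs x (Sym2.mem_mk_left x y), hs y (Sym2.mem_mk_right x y), hxy.ne⟩, rfl⟩
    · rintro _ ⟨⟨x, y⟩, hxy, rfl⟩
      obtain ⟨hx, hy, hne⟩ := Finset.mem_offDiag.mp hxy
      exact ⟨hs.isClique hx hy hne, by simp [hx, hy]⟩
  rw [heq, Set.ncard_coe_finset, Sym2.card_image_offDiag, hs.card_eq]

lemma meetsGeodesicsAtMost_one_spannedEdges {s : Set V} (hs : G.IsClique s) :
    MeetsGeodesicsAtMost G 1 (spannedEdges G s) := by
  refine meetsGeodesicsAtMost_one fun u v p hp e he f hf hep hfp => ?_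
  by_contra hef
  obtain ⟨a, ha, b, hb, hab⟩ := exists_two_le_dist_of_mem_edges hp hep hfp hef
  rcases eq_or_ne a b with rfl | hne
  · simp at hab
  · rw [dist_eq_one_iff_adj.mpr (hs (he.2 a ha) (hf.2 b hb) hne)] at hab
    omega

lemma choose_two_lt_egp_of_isNClique [Finite V] {n : ℕ} {s : Finset V} (hs : G.IsNClique n s)
    {a d : V} (hd : d ∉ s) (had : G.Adj a d) : n.choose 2 < G.egp := by
  have hgp : G.IsEdgeGPSet (spannedEdges G s ∪ {s(a, d)}) := by
    refine isEdgeGPSet_iff.mpr ⟨Set.union_subset (Set.sep_subset _ _) (by simpa), ?_⟩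
    refine (meetsGeodesicsAtMost_one_spannedEdges hs.isClique).union (n := 1)
      (meetsGeodesicsAtMost_one ?_)
    rintro u v p - _ rfl _ rfl - -
    rfl
  have hnew : s(a, d) ∉ spannedEdges G s := fun h => hd (h.2 d (Sym2.mem_mk_right a d))
  have := ncard_le_egp hgp
  rwa [Set.union_singleton, Set.ncard_insert_of_notMem hnew, ncard_spannedEdges hs] at this

lemma nonempty_iso_top_of_isNClique [Finite V] (hG : G.Preconnected) {n : ℕ} {s : Finset V}
    (hs : G.IsNClique n s) (hne : s.Nonempty) (hegp : G.egp ≤ n.choose 2) :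
    Nonempty (G ≃g (⊤ : SimpleGraph (Fin n))) := by
  have hall : ∀ x, x ∈ s := by
    intro x
    by_contra hx
    obtain ⟨a, ha⟩ := hne
    obtain ⟨p⟩ := hG a x
    obtain ⟨d, -, -, hd⟩ := p.exists_boundary_dart s ha hx
    exact (choose_two_lt_egp_of_isNClique hs hd d.adj).not_ge hegp
  refine nonempty_iso_top_fin_iff.mpr ⟨eq_top_iff_forall_ne_adj.mpr fun a b => ?_, ?_⟩
  · exact hs.isClique (hall a) (hall b)
  · rw [← hs.card_eq, ← Set.ncard_univ, ← Set.ncard_coe_finset, Set.eq_univ_of_forall hall]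

end Cliques

section ShortestCycles

variable {a : V} {c : G.Walk a a}

lemma segment_isPath_of_isCycle (hc : c.IsCycle) {i j : ℕ} (hij : i ≤ j)
    (h : 0 < i ∨ j < c.length) : (segment c hij).IsPath := by
  rw [segment, Walk.isPath_copy]
  rcases Nat.eq_zero_or_pos i with rfl | hi
  · have := hc.isPath_take (n := j) (by omega)
    rw [Walk.isPath_def] at this ⊢
    simpa [Walk.support_take, Walk.drop_zero] using this
  · exact (hc.isPath_drop hi).take _

lemma girth_le_length_add_length {p q : G.Walk u v} (hp : p.IsPath) (hq : q.IsPath)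
    (hne : p ≠ q) : G.girth ≤ p.length + q.length := by
  obtain ⟨w, -, -, c, hc, hle⟩ := hp.exists_isCycle_length_le_add_of_ne hq hne
  exact (girth_le_length hc).trans hle

/-- A shortest cycle is isometric: an arc of it and a shorter path between the ends of the arc
would enclose a cycle which is shorter still. -/
lemma dist_getVert_of_length_eq_girth (hc : c.IsCycle) (hg : c.length = G.girth) {i j : ℕ}
    (hij : i ≤ j) (hj : j ≤ c.length) :
    G.dist (c.getVert i) (c.getVert j) = min (j - i) (c.length - (j - i)) := by
  by_cases harc : 0 < i ∨ j < c.length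
  · have hle := dist_getVert_le c hij hj
    have hle' := dist_le ((c.take i).reverse.append (c.drop j).reverse)
    simp only [Walk.length_append, Walk.length_reverse, Walk.take_length, Walk.drop_length] at hle'
    obtain ⟨q, hq, hql⟩ := (segment c hij).reachable.exists_path_of_dist
    by_cases heq : segment c hij = q
    · have := length_segment c hij hj
      rw [heq] at this
      omega
    · have := girth_le_length_add_length (segment_isPath_of_isCycle hc hij harc) hq heq
      rw [length_segment c hij hj] at this
      omega
  · obtain ⟨rfl, rfl⟩ : i = 0 ∧ j = c.length := by omega
    simp

lemma djokovicWinkler_opposite_edges (hc : c.IsCycle) (hg : c.length = G.girth) {i : ℕ}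
    (hi : i + c.length / 2 < c.length) :
    DjokovicWinkler G s(c.getVert i, c.getVert (i + 1))
      s(c.getVert (i + c.length / 2), c.getVert (i + c.length / 2 + 1)) := by
  have h3 := hc.three_le_length
  refine ⟨_, _, _, _, rfl, rfl, ?_⟩
  have hdist : ∀ {k l : ℕ}, k ≤ l → l ≤ c.length →
      G.dist (c.getVert k) (c.getVert l) = min (l - k) (c.length - (l - k)) :=
    dist_getVert_of_length_eq_girth hc hg
  rw [hdist (by omega) (by omega), hdist (by omega) (by omega), hdist (by omega) (by omega),
    hdist (by omega) (by omega)]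
  omega

lemma injOn_getVert_edge_of_isTrail {p : G.Walk u v} (hp : p.IsTrail) :
    Set.InjOn (fun i => s(p.getVert i, p.getVert (i + 1))) {i | i < p.length} := by
  intro i hi j hj hij
  refine (hp.edges_nodup.getElem_inj_iff (hi := p.length_edges.symm ▸ hi)
    (hj := p.length_edges.symm ▸ hj)).mp ?_
  rwa [Walk.getElem_edges, Walk.getElem_edges]

lemma four_le_egp_of_four_le_girth [Finite V] (h4 : 4 ≤ G.girth) : 4 ≤ G.egp := by
  have hcyc : ¬ G.IsAcyclic := fun h => by
    rw [girth_eq_zero.mpr h] at h4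
    omega
  obtain ⟨a, c, hc, hg⟩ := exists_girth_eq_length.mpr hcyc
  set m := c.length / 2
  let edge (i : ℕ) : Sym2 V := s(c.getVert i, c.getVert (i + 1))
  have hgp : G.IsEdgeGPSet ({edge 0, edge (0 + m)} ∪ {edge 1, edge (1 + m)}) := by
    refine isEdgeGPSet_iff.mpr ⟨?_, ?_⟩
    · rintro _ ((rfl | rfl) | (rfl | rfl)) <;> exact c.adj_getVert_succ (by omega)
    · exact (djokovicWinkler_opposite_edges hc hg.symm (by omega)).meetsGeodesicsAtMost_one.union
        (djokovicWinkler_opposite_edges hc hg.symm (by omega)).meetsGeodesicsAtMost_one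
  have hcard : ∀ k ≥ 2, ({0, k, 1, 1 + k} : Finset ℕ).card = 4 := by grind
  have hlt : (({0, m, 1, 1 + m} : Finset ℕ) : Set ℕ) ⊆ {i | i < c.length} := by
    simp only [Finset.coe_insert, Finset.coe_singleton, Set.insert_subset_iff,
      Set.singleton_subset_iff, Set.mem_ofPred_eq]
    omega
  calc 4 = ({0, m, 1, 1 + m} : Finset ℕ).card := (hcard m (by omega)).symm
    _ = (edge '' ({0, m, 1, 1 + m} : Finset ℕ)).ncard := by
      rw [((injOn_getVert_edge_of_isTrail hc.isTrail).mono hlt).ncard_image, Set.ncard_coe_finset]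
    _ ≤ G.egp := ncard_le_egp (by
      simpa only [Finset.coe_insert, Finset.coe_singleton, Set.image_insert_eq,
        Set.image_singleton, Set.insert_union, Set.singleton_union, zero_add] using hgp)

end ShortestCycles

section Trees

/-- The set of leaves of `G`, in the encoding used by `egp_eq_three_iff`. -/
def leaves (G : SimpleGraph V) : Set V := {v | (G.neighborSet v).ncard = 1}

lemma mem_leaves_iff {l : V} : l ∈ leaves G ↔ ∃! w, G.Adj l w := by
  simp [leaves, Set.ncard_eq_one, Set.eq_singleton_iff_unique_mem, ExistsUnique]

lemma eq_of_isPath_of_isAcyclic (hG : G.IsAcyclic) {p q : G.Walk u v} (hp : p.IsPath)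
    (hq : q.IsPath) : p = q :=
  congrArg Subtype.val ((hG.subsingleton_path u v).elim ⟨p, hp⟩ ⟨q, hq⟩)

lemma length_eq_dist_of_isAcyclic (hG : G.IsAcyclic) {p : G.Walk u v} (hp : p.IsPath) :
    p.length = G.dist u v := by
  obtain ⟨q, hq, hql⟩ := p.reachable.exists_path_of_dist
  rw [eq_of_isPath_of_isAcyclic hG hp hq, hql]

lemma mem_edges_of_mem_edges_path (hG : G.IsAcyclic) {p : G.Walk u v} (hp : p.IsPath)
    (q : G.Walk u v) {e : Sym2 V} (he : e ∈ p.edges) : e ∈ q.edges := by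
  classical
  rw [eq_of_isPath_of_isAcyclic hG hp q.bypass_isPath] at he
  exact q.edges_bypass_subset_edges he

lemma start_mem_leaves_of_longest (hG : G.IsAcyclic) {p : G.Walk u v} (hp : p.IsPath)
    {e : Sym2 V} (he : e ∈ p.edges)
    (hmax : ∀ (w : V) (q : G.Walk w v), q.IsPath → e ∈ q.edges → q.length ≤ p.length) :
    u ∈ leaves G := by
  have hnil : ¬ p.Nil := fun h => by simp [Walk.edges_eq_nil.mpr h] at he
  refine mem_leaves_iff.mpr ⟨p.snd, p.adj_snd hnil, fun w hw => ?_⟩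
  refine hG.eq_snd_of_adj_start hp hw ?_
  by_contra hwp
  have := hmax w (.cons hw.symm p) (hp.cons hwp) (by simp [he])
  simp at this

lemma exists_path_between_leaves [Finite V] (hG : G.IsAcyclic) {e : Sym2 V}
    (he : e ∈ G.edgeSet) :
    ∃ a ∈ leaves G, ∃ b ∈ leaves G, ∃ p : G.Walk a b, p.IsPath ∧ e ∈ p.edges := by
  have := Fintype.ofFinite V
  let S : Set ℕ := {n | ∃ (a b : V) (p : G.Walk a b), p.IsPath ∧ e ∈ p.edges ∧ p.length = n}
  have hne : S.Nonempty := by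
    induction e with
    | h x y =>
      rw [mem_edgeSet] at he
      exact ⟨_, x, y, .cons he .nil, by simpa using he.ne, by simp, rfl⟩
  have hbdd : BddAbove S := by
    refine ⟨Fintype.card V, ?_⟩
    rintro _ ⟨a, b, p, hp, -, rfl⟩
    exact hp.length_lt.le
  obtain ⟨a, b, p, hp, hep, hl⟩ := Nat.sSup_mem hne hbdd
  have hmax : ∀ (x y : V) (q : G.Walk x y), q.IsPath → e ∈ q.edges → q.length ≤ p.length :=
    fun x y q hq heq => hl ▸ le_csSup hbdd ⟨x, y, q, hq, heq, rfl⟩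
  refine ⟨a, start_mem_leaves_of_longest hG hp hep fun x => hmax x b, b,
    start_mem_leaves_of_longest hG hp.reverse (by simpa using hep) fun x => ?_, p, hp, hep⟩
  simpa using hmax x a

lemma exists_mem_apply_notMem_of_isCycleOn {α : Type*} {σ : Equiv.Perm α} {s A : Set α}
    (hs : s.Finite) (hσ : σ.IsCycleOn s) {a b : α} (ha : a ∈ s) (hb : b ∈ s) (haA : a ∈ A)
    (hbA : b ∉ A) : ∃ x ∈ s, x ∈ A ∧ σ x ∉ A := by
  by_contra! h
  have hmaps : Set.MapsTo σ (s ∩ A) (s ∩ A) := fun x hx => ⟨hσ.1.mapsTo hx.1, h x hx.1 hx.2⟩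
  obtain ⟨n, rfl⟩ := hσ.exists_pow_eq' hs ha hb
  rw [← Equiv.Perm.iterate_eq_pow] at hbA
  exact hbA (hmaps.iterate n ⟨ha, haA⟩).2

lemma one_lt_ncard_mem_edges_of_isCycleOn_leaves [Finite V] (hG : G.IsAcyclic)
    {σ : Equiv.Perm V} (hσ : σ.IsCycleOn (leaves G)) (P : ∀ l, G.Walk l (σ l)) {e : Sym2 V}
    (he : e ∈ G.edgeSet) : 1 < {l ∈ leaves G | e ∈ (P l).edges}.ncard := by
  obtain ⟨a, ha, b, hb, p, hp, hep⟩ := exists_path_between_leaves hG he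
  let A : Set V := {w | ∃ q : G.Walk a w, e ∉ q.edges}
  have haA : a ∈ A := ⟨.nil, by simp⟩
  have hbA : b ∉ A := fun ⟨q, hq⟩ => hq (mem_edges_of_mem_edges_path hG hp q hep)
  have hcross : ∀ {x y : V} (q : G.Walk x y), x ∈ A → y ∉ A → e ∈ q.edges := by
    rintro x y q ⟨r, hr⟩ hy
    by_contra hq
    exact hy ⟨r.append q, by simp [hr, hq]⟩
  have hfin := (leaves G).toFinite
  -- The tour of the leaves gets from the side `A` of `e` to the other side and has to come back.
  obtain ⟨x, hx, hxA, hσx⟩ := exists_mem_apply_notMem_of_isCycleOn hfin hσ ha hb haA hbA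
  obtain ⟨y, hy, hyA, hσy⟩ :=
    exists_mem_apply_notMem_of_isCycleOn (A := Aᶜ) hfin hσ hb ha hbA (not_not.mpr haA)
  refine (Set.one_lt_ncard).mpr
    ⟨x, ⟨hx, hcross (P x) hxA hσx⟩, y, ⟨hy, ?_⟩, ne_of_mem_of_not_mem hxA hyA⟩
  simpa using hcross (P y).reverse (not_not.mp hσy) hyA

lemma egp_le_ncard_leaves [Finite V] (hT : G.IsTree) : G.egp ≤ (leaves G).ncard := by
  classical
  have := Fintype.ofFinite V
  refine egp_le fun X hX => ?_
  choose P hP using hT.connected.exists_isPath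
  obtain ⟨σ, hσ, -⟩ := (leaves G).toFinset.exists_cycleOn
  rw [Set.coe_toFinset] at hσ
  have htwo := Finset.card_mul_le_card_mul (s := X.toFinset) (t := (leaves G).toFinset)
    (fun e l => e ∈ (P l (σ l)).edges) (m := 2) (n := 2) (fun e he => ?_) fun l _ => ?_
  · simp only [← Set.ncard_eq_toFinset_card'] at htwo
    omega
  · have := one_lt_ncard_mem_edges_of_isCycleOn_leaves hT.isAcyclic hσ (fun l => P l (σ l))
      (hX.1 (Set.mem_toFinset.mp he))
    rw [← Set.ncard_coe_finset, Finset.coe_bipartiteAbove]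
    simpa [Nat.succ_le_iff] using this
  · have := hX.2 _ _ _ (hP l (σ l)) (length_eq_dist_of_isAcyclic hT.isAcyclic (hP l (σ l)))
    rw [← Set.ncard_coe_finset, Finset.coe_bipartiteBelow]
    simpa [Set.inter_def] using this

lemma eq_or_eq_of_mem_leaves_of_mem_support {p : G.Walk u v} (hp : p.IsPath) {l : V}
    (hl : l ∈ leaves G) (hlp : l ∈ p.support) : l = u ∨ l = v := by
  obtain ⟨i, rfl, hi⟩ := Walk.mem_support_iff_exists_getVert.mp hlp
  by_contra! hne
  have hi0 : i ≠ 0 := by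
    rintro rfl
    exact hne.1 p.getVert_zero
  have hilt : i < p.length := hi.lt_of_ne fun h => hne.2 (h ▸ p.getVert_length)
  have hle := Set.ncard_le_ncard (p.toSubgraph.neighborSet_subset (p.getVert i))
    (Set.finite_of_ncard_ne_zero (hl.trans_ne one_ne_zero))
  rw [hp.ncard_neighborSet_toSubgraph_internal_eq_two hi0 hilt, hl] at hle
  omega

lemma eq_or_eq_of_adj_leaves (hG : G.Preconnected) {l k : V} (hl : l ∈ leaves G)
    (hk : k ∈ leaves G) (hlk : G.Adj l k) (w : V) : w = l ∨ w = k := by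
  by_contra hw
  obtain ⟨p⟩ := hG l w
  obtain ⟨d, -, hd, hd'⟩ := p.exists_boundary_dart {l, k} (by simp) hw
  rcases hd with hd | hd
  · exact hd' (.inr ((mem_leaves_iff.mp hl).unique (hd ▸ d.adj) hlk))
  · exact hd' (.inl ((mem_leaves_iff.mp hk).unique (hd ▸ d.adj) hlk.symm))

lemma ncard_leaves_le_egp [Finite V] (hG : G.Preconnected) (h3 : 3 ≤ (leaves G).ncard) :
    (leaves G).ncard ≤ G.egp := by
  choose! n hadj using fun l (hl : l ∈ leaves G) => (mem_leaves_iff.mp hl).exists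
  have hinj : Set.InjOn (fun l => s(l, n l)) (leaves G) := by
    intro l hl k hk h
    rcases Sym2.eq_iff.mp h with ⟨hlk, -⟩ | ⟨-, hlk⟩
    · exact hlk
    · have hsub : leaves G ⊆ {l, k} := fun w _ =>
        eq_or_eq_of_adj_leaves hG hl hk (hlk ▸ hadj l hl) w
      have := (Set.ncard_le_ncard hsub).trans (Set.ncard_insert_le l {k})
      rw [Set.ncard_singleton] at this
      omega
  rw [← hinj.ncard_image]
  refine ncard_le_egp ⟨?_, fun u v p hp _ => ?_⟩
  · rintro _ ⟨l, hl, rfl⟩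
    exact hadj l hl
  · have hends : (fun l => s(l, n l)) '' leaves G ∩ {e | e ∈ p.edges} ⊆ {s(u, n u), s(v, n v)} := by
      rintro _ ⟨⟨l, hl, rfl⟩, he⟩
      rcases eq_or_eq_of_mem_leaves_of_mem_support hp hl
        (p.fst_mem_support_of_mem_edges he) with rfl | rfl <;> simp
    calc _ ≤ ({s(u, n u), s(v, n v)} : Set (Sym2 V)).ncard := Set.ncard_le_ncard hends
      _ ≤ 2 := (Set.ncard_insert_le _ _).trans_eq (by rw [Set.ncard_singleton])

lemma egp_eq_three_iff_ncard_leaves [Finite V] (hT : G.IsTree) :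
    G.egp = 3 ↔ (leaves G).ncard = 3 := by
  have hle := egp_le_ncard_leaves hT
  have hge := ncard_leaves_le_egp hT.connected.preconnected
  constructor <;> intro h <;> have := hge (by omega) <;> omega

end Trees

end EdgeGeneralPosition

open EdgeGeneralPosition

/-- For a finite connected graph `G`, `gp_e(G) = 3` if and only if `G` is
the complete graph `K₃` or a tree with exactly three leaves. -/
theorem egp_eq_three_iff {V : Type*} [Fintype V] (G : SimpleGraph V) (hG : G.Connected) :
    G.egp = 3 ↔
      Nonempty (G ≃g (⊤ : SimpleGraph (Fin 3))) ∨
        (G.IsTree ∧ {v : V | (G.neighborSet v).ncard = 1}.ncard = 3) := by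
  constructor
  · intro hegp
    by_cases hac : G.IsAcyclic
    · exact .inr ⟨⟨hG, hac⟩, (egp_eq_three_iff_ncard_leaves ⟨hG, hac⟩).mp hegp⟩
    · left
      have hgirth : G.girth = 3 := by
        refine le_antisymm ?_ (SimpleGraph.three_le_girth hac)
        by_contra! hlt
        have := four_le_egp_of_four_le_girth hlt
        omega
      obtain ⟨a, c, hc, hlen⟩ := SimpleGraph.exists_girth_eq_length.mpr hac
      obtain ⟨s, hs⟩ :=
        SimpleGraph.is3Clique_iff_exists_cycle_length_three.mpr ⟨a, c, hc, hlen ▸ hgirth⟩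
      exact nonempty_iso_top_of_isNClique hG.preconnected hs
        (Finset.card_pos.mp (by simp [hs.card_eq])) hegp.le
  · rintro (hK | ⟨hT, hL⟩)
    · obtain ⟨rfl, hV⟩ := nonempty_iso_top_fin_iff.mp hK
      rw [egp_top, hV]
      rfl
    · exact (egp_eq_three_iff_ncard_leaves hT).mpr hL
end
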